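/- Assume GCH. For every uncountable cardinal κ there exists a universal group of cardinality κ. -/

import Mathlib

universe u

/-- A group `U` is universal if every group of cardinality at most `|U|` embeds into it. -/
def IsUniversalGroup (U : Type u) [Group U] : Prop :=
  ∀ (K : Type u) [Group K], Cardinal.mk K ≤ Cardinal.mk U →
    ∃ f : K →* U, Function.Injective f

/-- The generalized continuum hypothesis. -/
def GCH : Prop := ∀ c : Cardinal.{u}, Cardinal.aleph0 ≤ c → 2 ^ c = Order.succ c

/-!
Write a group of cardinality at most `κ` as the union of a chain of subgroups of size less than
`κ`, indexed by `κ`. Multiplying together coset representatives for the successive steps of the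
chain gives every element a unique normal form, which identifies the group with a direct sum
`⨁ i, Y i`. Under this identification, left multiplication by an element of the `i`-th subgroup
changes only the coordinates up to `i`. So the group embeds into the union `U` of the increasing
groups of permutations of `⨁ i, Y i` that are bounded in this way; each of these has size at most
`2 ^ c` for some `c < κ`, hence `U` has size `κ`. For `U` not to depend on the group, the number of
cosets at each step must be prescribed, and this is achieved by passing to the product of the group
with `⨁ i, Y i` itself.
-/

open Cardinal Set

lemma sort_union_of_forall_lt {ι : Type*} [LinearOrder ι] {s t : Finset ι}
    (hst : ∀ i ∈ s, ∀ j ∈ t, i < j) : (s ∪ t).sort = s.sort ++ t.sort := by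
  have hnodup : (s.sort ++ t.sort).Nodup :=
    List.nodup_append.2 ⟨s.sort_nodup _, t.sort_nodup _, fun i hi j hj =>
      (hst i ((s.mem_sort _).1 hi) j ((t.mem_sort _).1 hj)).ne⟩
  have hsorted : (s.sort ++ t.sort).Pairwise (· ≤ ·) :=
    List.pairwise_append.2 ⟨s.pairwise_sort _, t.pairwise_sort _, fun i hi j hj =>
      (hst i ((s.mem_sort _).1 hi) j ((t.mem_sort _).1 hj)).le⟩
  simpa only [List.toFinset_append, Finset.sort_toFinset] using
    (List.toFinset_sort (· ≤ ·) hnodup).2 hsorted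

lemma mk_iSup_le_of_directed {G ι : Type u} [Group G] [Nonempty ι] {S : ι → Subgroup G}
    (hS : Directed (· ≤ ·) S) : #↥(⨆ i, S i) ≤ #ι * ⨆ i, #(S i) := by
  change #((⨆ i, S i : Subgroup G) : Set G) ≤ _
  rw [Subgroup.coe_iSup_of_directed hS]
  exact mk_iUnion_le _

lemma mk_subgroup_closure_le {G : Type u} [Group G] (s : Set G) :
    #(Subgroup.closure s) ≤ max #s ℵ₀ := by
  rw [FreeGroup.closure_eq_range]
  refine (mk_le_of_surjective (MonoidHom.rangeRestrict_surjective _)).trans ?_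
  cases isEmpty_or_nonempty s with
  | inl _ => exact mk_le_aleph0.trans (le_max_right _ _)
  | inr _ => rw [mk_freeGroup]

lemma eq_one_or_exists_mem_of_mem_iSup_Iio {ι G : Type*} [LinearOrder ι] [Group G]
    {B : ι → Subgroup G} (hB : Monotone B) {i : ι} {g : G} (hg : g ∈ ⨆ j : Iio i, B j) :
    g = 1 ∨ ∃ j < i, g ∈ B j := by
  cases isEmpty_or_nonempty (Iio i) with
  | inl _ => exact Or.inl (by rwa [iSup_of_empty, Subgroup.mem_bot] at hg)
  | inr _ =>
    have hdir : Directed (· ≤ ·) fun j : Iio i => B j :=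
      (hB.comp (Subtype.mono_coe _)).directed_le
    obtain ⟨j, hj⟩ := (Subgroup.mem_iSup_of_directed hdir).1 hg
    exact Or.inr ⟨j, j.2, hj⟩

lemma exists_rightTransversal {Y G : Type*} [Group G] {A : Subgroup G} (e : Y ≃ G ⧸ A) (o : Y) :
    ∃ τ : Y → G, τ o = 1 ∧ ∀ g, ∃! y, g * (τ y)⁻¹ ∈ A := by
  refine ⟨fun y => (e y).out⁻¹ * (e o).out, inv_mul_cancel _, fun g => ?_⟩
  have hcoset (y : Y) : g * ((e y).out⁻¹ * (e o).out)⁻¹ ∈ A ↔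
      e y = QuotientGroup.mk ((e o).out * g⁻¹) := by
    rw [eq_comm, ← QuotientGroup.out_eq' (e y), QuotientGroup.eq, QuotientGroup.out_eq']
    simp [mul_assoc]
  simpa only [hcoset] using e.bijective.existsUnique _

section SupportedOn

variable {ι : Type*} {Y : ι → Type*} [∀ i, AddCommGroup (Y i)]

variable (Y) in
/-- The elements of the direct sum `⨁ i, Y i` whose support is contained in `s`. -/
def supportedOn (s : Set ι) : AddSubgroup (Π₀ i, Y i) where
  carrier := {x | ∀ i ∉ s, x i = 0}
  zero_mem' _ _ := rfl
  add_mem' hx hy i hi := by simp [hx i hi, hy i hi]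
  neg_mem' hx i hi := by simp [hx i hi]

lemma supportedOn_mono {s t : Set ι} (hst : s ⊆ t) : supportedOn Y s ≤ supportedOn Y t :=
  fun _ hx i hi => hx i fun his => hi (hst his)

lemma single_mem_supportedOn [DecidableEq ι] {s : Set ι} {i : ι} (hi : i ∈ s) (y : Y i) :
    DFinsupp.single i y ∈ supportedOn Y s :=
  fun _ hj => DFinsupp.single_eq_of_ne (ne_of_mem_of_not_mem hi hj).symm

lemma exists_add_eq_of_supportedOn_compl (s : Set ι) (x : Π₀ i, Y i) :
    ∃ w ∈ supportedOn Y s, ∃ u ∈ supportedOn Y sᶜ, w + u = x := by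
  classical
  exact ⟨x.filter (· ∈ s), fun _ hi => DFinsupp.filter_apply_neg _ hi,
    x.filter (· ∉ s), fun _ hi => DFinsupp.filter_apply_neg _ hi,
    DFinsupp.filter_add_filter_not _ _⟩

lemma exists_mem_supportedOn_Iic [Preorder ι] [IsDirectedOrder ι] [Nonempty ι] (x : Π₀ i, Y i) :
    ∃ i, x ∈ supportedOn Y (Iic i) := by
  classical
  obtain ⟨i, hi⟩ := x.support.exists_le
  exact ⟨i, fun j hj => by_contra fun hxj => hj (hi j (DFinsupp.mem_support_iff.2 hxj))⟩

lemma exists_apply_ne_zero_mem_supportedOn_Iic [LinearOrder ι] {x : Π₀ i, Y i} (hx : x ≠ 0) :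
    ∃ i, x i ≠ 0 ∧ x ∈ supportedOn Y (Iic i) := by
  classical
  have hne : x.support.Nonempty := by simpa [Finset.nonempty_iff_ne_empty] using hx
  refine ⟨x.support.max' hne, DFinsupp.mem_support_iff.1 (x.support.max'_mem hne),
    fun j hj => by_contra fun hxj => hj ?_⟩
  exact x.support.le_max' j (DFinsupp.mem_support_iff.2 hxj)

lemma infinite_supportedOn {s : Set ι} {i : ι} [Infinite (Y i)] (hi : i ∈ s) :
    Infinite (supportedOn Y s) := by
  classical
  exact .of_injective (fun y => ⟨DFinsupp.single i y, single_mem_supportedOn hi y⟩)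
    fun _ _ h => DFinsupp.single_injective (congrArg Subtype.val h)

lemma mk_supportedOn_le {ι : Type u} {Y : ι → Type u} [∀ i, AddCommGroup (Y i)] (s : Set ι) :
    #(supportedOn Y s) ≤ max #(Σ i : s, Y i) ℵ₀ := by
  classical
  let graph (x : supportedOn Y s) : Finset (Σ i : s, Y i) :=
    (x.1.support.subtype (· ∈ s)).sigma fun i => {x.1 i}
  have hgraph : Function.Injective graph := by
    intro x y hxy
    have hmem (z : supportedOn Y s) (i : s) (v : Y i) :
        ⟨i, v⟩ ∈ graph z ↔ z.1 i ≠ 0 ∧ v = z.1 i := by simp [graph]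
    ext i
    by_cases hi : i ∈ s
    · have hx := hmem x ⟨i, hi⟩ (x.1 i)
      have hy := hmem y ⟨i, hi⟩ (y.1 i)
      rw [hxy, hmem] at hx
      rw [← hxy, hmem] at hy
      grind
    · rw [x.2 i hi, y.2 i hi]
  refine (mk_le_of_injective hgraph).trans ?_
  cases finite_or_infinite (Σ i : s, Y i) with
  | inl _ => exact mk_le_aleph0.trans (le_max_right _ _)
  | inr _ => exact (mk_finset_of_infinite _).trans_le (le_max_left _ _)

lemma mk_supportedOn_Iic_le {ι : Type u} [Preorder ι] {Y : ι → Type u}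
    [∀ i, AddCommGroup (Y i)] {i : ι} [Infinite (Y i)] (hι : #(Iic i) ≤ #(Y i))
    (hY : ∀ j ≤ i, #(Y j) ≤ #(Y i)) : #(supportedOn Y (Iic i)) ≤ #(Y i) := by
  refine (mk_supportedOn_le _).trans (max_le ?_ (aleph0_le_mk _))
  calc #(Σ j : Iic i, Y j) = sum fun j : Iic i => #(Y j) := mk_sigma _
    _ ≤ sum fun _ : Iic i => #(Y i) := sum_le_sum _ _ fun j => hY j j.2
    _ = #(Iic i) * #(Y i) := sum_const' _ _
    _ ≤ #(Y i) * #(Y i) := mul_le_mul_left hι _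
    _ = #(Y i) := mul_eq_self (aleph0_le_mk _)

end SupportedOn

section PermsBelow

variable {ι : Type*} [LinearOrder ι]

/-- The permutations of the direct sum `⨁ i, Y i` that act on the coordinates up to `a` alone:
splitting the sum at `a`, they are the maps `σ × id` with `σ` a permutation of `⨁ i ≤ a, Y i`. -/
def permsBelow (Y : ι → Type*) [∀ i, AddCommGroup (Y i)] (a : ι) :
    Subgroup (Equiv.Perm (Π₀ i, Y i)) where
  carrier := {σ | (∀ x, σ x ∈ supportedOn Y (Iic a) ↔ x ∈ supportedOn Y (Iic a)) ∧
    ∀ w ∈ supportedOn Y (Iic a), ∀ u ∈ supportedOn Y (Ioi a), σ (w + u) = σ w + u}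
  one_mem' := ⟨fun _ => Iff.rfl, fun _ _ _ _ => rfl⟩
  mul_mem' := by
    rintro σ τ ⟨hσ, hσ_add⟩ ⟨hτ, hτ_add⟩
    refine ⟨fun x => (hσ _).trans (hτ x), fun w hw u hu => ?_⟩
    simp only [Equiv.Perm.mul_apply, hτ_add w hw u hu, hσ_add _ ((hτ w).2 hw) u hu]
  inv_mem' := by
    rintro σ ⟨hσ, hσ_add⟩
    have hinv (x) : σ⁻¹ x ∈ supportedOn Y (Iic a) ↔ x ∈ supportedOn Y (Iic a) := by
      rw [← hσ, Equiv.Perm.coe_inv, Equiv.apply_symm_apply]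
    refine ⟨hinv, fun w hw u hu => ?_⟩
    rw [Equiv.Perm.inv_eq_iff_eq, hσ_add _ ((hinv w).2 hw) u hu,
      Equiv.Perm.coe_inv, Equiv.apply_symm_apply]

variable {Y : ι → Type*} [∀ i, AddCommGroup (Y i)]

lemma exists_add_eq_Iic_Ioi (a : ι) (x : Π₀ i, Y i) :
    ∃ w ∈ supportedOn Y (Iic a), ∃ u ∈ supportedOn Y (Ioi a), w + u = x := by
  simpa only [compl_Iic] using exists_add_eq_of_supportedOn_compl (Iic a) x

lemma permsBelow_mono : Monotone (permsBelow Y) := by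
  rintro a b hab σ ⟨hσ, hσ_add⟩
  have hIic : supportedOn Y (Iic a) ≤ supportedOn Y (Iic b) :=
    supportedOn_mono (Iic_subset_Iic.2 hab)
  have hIoi : supportedOn Y (Ioi b) ≤ supportedOn Y (Ioi a) :=
    supportedOn_mono (Ioi_subset_Ioi hab)
  refine ⟨fun x => ?_, fun x _ v hv => ?_⟩ <;>
    obtain ⟨w, hw, u, hu, rfl⟩ := exists_add_eq_Iic_Ioi a x
  · rw [hσ_add w hw u hu, add_mem_cancel_left (hIic ((hσ w).2 hw)),
      add_mem_cancel_left (hIic hw)]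
  · rw [add_assoc, hσ_add w hw _ (add_mem hu (hIoi hv)), hσ_add w hw u hu, add_assoc]

lemma mk_permsBelow_le {ι : Type u} [LinearOrder ι] {Y : ι → Type u} [∀ i, AddCommGroup (Y i)]
    {a : ι} [Infinite (supportedOn Y (Iic a))] :
    #(permsBelow Y a) ≤ 2 ^ #(supportedOn Y (Iic a)) := by
  rw [← mk_perm_eq_two_power]
  let restrict (σ : permsBelow Y a) : Equiv.Perm (supportedOn Y (Iic a)) :=
    σ.1.subtypePerm σ.2.1
  refine mk_le_of_injective (f := restrict) fun σ τ hστ => Subtype.ext (Equiv.ext fun x => ?_)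
  obtain ⟨w, hw, u, hu, rfl⟩ := exists_add_eq_Iic_Ioi a x
  have hw_eq : σ.1 w = τ.1 w := congrArg Subtype.val (Equiv.congr_fun hστ ⟨w, hw⟩)
  rw [σ.2.2 w hw u hu, τ.2.2 w hw u hu, hw_eq]

end PermsBelow

/-- A normal form in the group `G` with digits from the types `Y i`: `G` is the union of a chain of
subgroups, and the digits at `i` represent the right cosets, in the `i`-th subgroup, of the union
of the earlier ones. The digit `0` represents the trivial coset by `1`. At a minimal `i` the
earlier subgroups generate the trivial group, so there the digits exhaust the subgroup itself. -/
structure NormalForm {ι : Type*} [LinearOrder ι] (Y : ι → Type*) [∀ i, AddCommGroup (Y i)]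
    (G : Type*) [Group G] where
  filtration : ι → Subgroup G
  monotone : Monotone filtration
  exists_mem : ∀ g, ∃ i, g ∈ filtration i
  digit : ∀ i, Y i → G
  digit_zero : ∀ i, digit i 0 = 1
  digit_mem : ∀ i y, digit i y ∈ filtration i
  existsUnique_digit : ∀ i, ∀ g ∈ filtration i,
    ∃! y, g * (digit i y)⁻¹ ∈ ⨆ j : Iio i, filtration j

namespace NormalForm

variable {ι : Type*} [LinearOrder ι] {Y : ι → Type*} [∀ i, AddCommGroup (Y i)]
  {G : Type*} [Group G] (N : NormalForm Y G)

lemma nonempty_of_equiv_quotient {B : ι → Subgroup G} (hB : Monotone B)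
    (hB_exists : ∀ g, ∃ i, g ∈ B i)
    (e : ∀ i, Y i ≃ B i ⧸ (⨆ j : Iio i, B j).subgroupOf (B i)) : Nonempty (NormalForm Y G) := by
  choose τ hτ_zero hτ using fun i => exists_rightTransversal (e i) 0
  exact ⟨{
    filtration := B
    monotone := hB
    exists_mem := hB_exists
    digit i y := τ i y
    digit_zero i := by simp [hτ_zero]
    digit_mem i y := (τ i y).2
    existsUnique_digit i g hg := hτ i ⟨g, hg⟩ }⟩

open scoped Classical in
/-- The group element with the given digits, multiplied out in increasing order of the index. -/
noncomputable def eval (x : Π₀ i, Y i) : G :=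
  (x.support.sort.map fun i => N.digit i (x i)).prod

lemma eval_zero : N.eval 0 = 1 := by simp [eval]

lemma eval_single (i : ι) (y : Y i) : N.eval (DFinsupp.single i y) = N.digit i y := by
  classical
  rcases eq_or_ne y 0 with rfl | hy
  · rw [DFinsupp.single_zero, eval_zero, N.digit_zero]
  · simp [eval, DFinsupp.support_single hy]

lemma eval_add {s t : Set ι} (hst : ∀ i ∈ s, ∀ j ∈ t, i < j) {w u : Π₀ i, Y i}
    (hw : w ∈ supportedOn Y s) (hu : u ∈ supportedOn Y t) :
    N.eval (w + u) = N.eval w * N.eval u := by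
  classical
  have mem_s {i} (hi : i ∈ w.support) : i ∈ s :=
    by_contra fun his => DFinsupp.mem_support_iff.1 hi (hw i his)
  have mem_t {i} (hi : i ∈ u.support) : i ∈ t :=
    by_contra fun hit => DFinsupp.mem_support_iff.1 hi (hu i hit)
  have hlt : ∀ i ∈ w.support, ∀ j ∈ u.support, i < j :=
    fun i hi j hj => hst i (mem_s hi) j (mem_t hj)
  have hu_zero {i} (hi : i ∈ w.support) : u i = 0 :=
    hu i fun hit => (hst i (mem_s hi) i hit).false
  have hw_zero {i} (hi : i ∈ u.support) : w i = 0 :=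
    hw i fun his => (hst i his i (mem_t hi)).false
  have hsupport : (w + u).support = w.support ∪ u.support := by
    refine DFinsupp.support_add.antisymm fun i hi => ?_
    rcases Finset.mem_union.1 hi with hi | hi
    · simpa [hu_zero hi] using hi
    · simpa [hw_zero hi] using hi
  rw [eval, hsupport, sort_union_of_forall_lt hlt, List.map_append, List.prod_append]
  congr 2 <;> refine List.map_congr_left fun i hi => ?_
  · rw [DFinsupp.add_apply, hu_zero ((Finset.mem_sort _).1 hi), add_zero]
  · rw [DFinsupp.add_apply, hw_zero ((Finset.mem_sort _).1 hi), zero_add]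

lemma eval_add_Iic_Ioi {a : ι} {w u : Π₀ i, Y i} (hw : w ∈ supportedOn Y (Iic a))
    (hu : u ∈ supportedOn Y (Ioi a)) : N.eval (w + u) = N.eval w * N.eval u :=
  N.eval_add (fun _ hi _ hj => lt_of_le_of_lt hi hj) hw hu

lemma eval_add_single {i : ι} {w : Π₀ i, Y i} (hw : w ∈ supportedOn Y (Iio i)) (y : Y i) :
    N.eval (w + DFinsupp.single i y) = N.eval w * N.digit i y := by
  rw [N.eval_add (t := {i}) (by simp) hw (single_mem_supportedOn (mem_singleton i) y), eval_single]

lemma eval_mem {s : Set ι} {x : Π₀ i, Y i} (hx : x ∈ supportedOn Y s) {S : Subgroup G}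
    (hS : ∀ i ∈ s, N.filtration i ≤ S) : N.eval x ∈ S := by
  classical
  refine Subgroup.list_prod_mem _ fun g hg => ?_
  obtain ⟨i, hi, rfl⟩ := List.mem_map.1 hg
  have his : i ∈ s := by_contra fun his => by simp [hx i his] at hi
  exact hS i his (N.digit_mem i _)

lemma eval_mem_filtration {i : ι} {x : Π₀ i, Y i} (hx : x ∈ supportedOn Y (Iic i)) :
    N.eval x ∈ N.filtration i :=
  N.eval_mem hx fun _ hj => N.monotone hj

lemma eval_mul_inv_digit_mem {i : ι} {x : Π₀ i, Y i} (hx : x ∈ supportedOn Y (Iic i)) :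
    N.eval x * (N.digit i (x i))⁻¹ ∈ ⨆ j : Iio i, N.filtration j := by
  have herase : x.erase i ∈ supportedOn Y (Iio i) := by
    intro j hj
    rcases (not_lt.1 hj).eq_or_lt with rfl | hij
    · exact DFinsupp.erase_same
    · rw [DFinsupp.erase_ne hij.ne', hx j (not_le.2 hij)]
  rw [← DFinsupp.erase_add_single i x, N.eval_add_single herase]
  simpa using N.eval_mem herase fun j hj => le_iSup (fun j : Iio i => N.filtration j) ⟨j, hj⟩

lemma eval_injective : Function.Injective N.eval := by
  intro x y hxy
  by_contra hne
  -- At the last index where `x` and `y` differ, the digits are determined by the same coset.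
  obtain ⟨i, hi, hd⟩ := exists_apply_ne_zero_mem_supportedOn_Iic (sub_ne_zero.2 (Ne.symm hne))
  obtain ⟨w, hw, u, hu, rfl⟩ := exists_add_eq_Iic_Ioi i x
  set d := y - (w + u) with hd_def
  have hwd : w + d ∈ supportedOn Y (Iic i) := add_mem hw hd
  have hy : y = w + d + u := by rw [hd_def]; abel
  rw [hy, N.eval_add_Iic_Ioi hw hu, N.eval_add_Iic_Ioi hwd hu, mul_left_inj] at hxy
  have hdigit : w i = (w + d) i :=
    (N.existsUnique_digit i _ (N.eval_mem_filtration hw)).unique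
      (N.eval_mul_inv_digit_mem hw) (hxy ▸ N.eval_mul_inv_digit_mem hwd)
  exact hi (by simpa using hdigit)

variable [WellFoundedLT ι]

lemma exists_eval_eq {i : ι} {g : G} (hg : g ∈ N.filtration i) :
    ∃ x ∈ supportedOn Y (Iic i), N.eval x = g := by
  induction i using WellFoundedLT.induction generalizing g with
  | ind i ih =>
    obtain ⟨y, hy, -⟩ := N.existsUnique_digit i g hg
    obtain ⟨x, hx, hxg⟩ : ∃ x ∈ supportedOn Y (Iio i), N.eval x = g * (N.digit i y)⁻¹ := by
      rcases eq_one_or_exists_mem_of_mem_iSup_Iio N.monotone hy with h_one | ⟨j, hj, hgj⟩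
      · exact ⟨0, zero_mem _, by rw [h_one, eval_zero]⟩
      · obtain ⟨x, hx, hxg⟩ := ih j hj hgj
        exact ⟨x, supportedOn_mono (Iic_subset_Iio.2 hj) hx, hxg⟩
    refine ⟨x + DFinsupp.single i y, add_mem (supportedOn_mono Iio_subset_Iic_self hx)
      (single_mem_supportedOn self_mem_Iic y), ?_⟩
    rw [N.eval_add_single hx, hxg, inv_mul_cancel_right]

lemma eval_surjective : Function.Surjective N.eval := fun g =>
  let ⟨_, hi⟩ := N.exists_mem g
  let ⟨x, _, hx⟩ := N.exists_eval_eq hi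
  ⟨x, hx⟩

lemma eval_mem_filtration_iff {i : ι} {x : Π₀ i, Y i} :
    N.eval x ∈ N.filtration i ↔ x ∈ supportedOn Y (Iic i) := by
  refine ⟨fun hx => ?_, N.eval_mem_filtration⟩
  obtain ⟨z, hz, hzx⟩ := N.exists_eval_eq hx
  exact N.eval_injective hzx ▸ hz

/-- The direct sum of the digits as a model of the underlying set of `G`. -/
noncomputable def evalEquiv : (Π₀ i, Y i) ≃ G :=
  Equiv.ofBijective N.eval ⟨N.eval_injective, N.eval_surjective⟩

/-- The left regular representation of `G`, transported to the direct sum of the digits. -/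
noncomputable def regularRep : G →* Equiv.Perm (Π₀ i, Y i) :=
  N.evalEquiv.symm.permCongrHom.toMonoidHom.comp (MulAction.toPermHom G G)

lemma eval_regularRep (g : G) (x : Π₀ i, Y i) : N.eval (N.regularRep g x) = g * N.eval x :=
  N.evalEquiv.apply_symm_apply _

lemma regularRep_injective : Function.Injective N.regularRep :=
  N.evalEquiv.symm.permCongrHom.injective.comp MulAction.toPerm_injective

lemma regularRep_mem_permsBelow {i : ι} {g : G} (hg : g ∈ N.filtration i) :
    N.regularRep g ∈ permsBelow Y i := by
  have hmem (x) : N.regularRep g x ∈ supportedOn Y (Iic i) ↔ x ∈ supportedOn Y (Iic i) := by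
    rw [← N.eval_mem_filtration_iff, eval_regularRep, Subgroup.mul_mem_cancel_left _ hg,
      eval_mem_filtration_iff]
  refine ⟨hmem, fun w hw u hu => N.eval_injective ?_⟩
  rw [N.eval_add_Iic_Ioi ((hmem w).2 hw) hu, eval_regularRep, eval_regularRep,
    N.eval_add_Iic_Ioi hw hu, mul_assoc]

lemma regularRep_mem_iSup_permsBelow (g : G) : N.regularRep g ∈ ⨆ i, permsBelow Y i :=
  let ⟨i, hi⟩ := N.exists_mem g
  Subgroup.mem_iSup_of_mem i (N.regularRep_mem_permsBelow hi)

end NormalForm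

section PaddedFiltration

variable {ι : Type u} [LinearOrder ι] {K : Type u} [Group K] (r : K → ι)
  (Y : ι → Type u) [∀ i, AddCommGroup (Y i)]

/-- The filtration of `K × ⨁ i, Y i` by the elements of `K` generated in rank at most `i` and the
sums supported up to `i`. The second factor makes every step of the filtration large. -/
def paddedFiltration (i : ι) : Subgroup (K × Multiplicative (Π₀ i, Y i)) :=
  (Subgroup.closure (r ⁻¹' Iic i)).prod (supportedOn Y (Iic i)).toSubgroup

lemma paddedFiltration_mono : Monotone (paddedFiltration r Y) := fun i j hij =>
  have hIic : Iic i ⊆ Iic j := Iic_subset_Iic.2 hij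
  Subgroup.prod_mono (Subgroup.closure_mono (preimage_mono hIic)) (supportedOn_mono hIic)

lemma exists_mem_paddedFiltration (g : K × Multiplicative (Π₀ i, Y i)) :
    ∃ i, g ∈ paddedFiltration r Y i := by
  have : Nonempty ι := ⟨r g.1⟩
  obtain ⟨i, hi⟩ := exists_mem_supportedOn_Iic g.2.toAdd
  refine ⟨max (r g.1) i, Subgroup.subset_closure (le_max_left (r g.1) i), ?_⟩
  exact supportedOn_mono (Iic_subset_Iic.2 (le_max_right _ _)) hi

variable {r Y}

lemma mk_paddedFiltration_le (hr : Function.Injective r) {i : ι} [Infinite (Y i)]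
    (hι : #(Iic i) ≤ #(Y i)) (hY : ∀ j ≤ i, #(Y j) ≤ #(Y i)) :
    #(paddedFiltration r Y i) ≤ #(Y i) := by
  have hclosure : #(Subgroup.closure (r ⁻¹' Iic i)) ≤ #(Y i) :=
    (mk_subgroup_closure_le _).trans <|
      max_le ((mk_preimage_of_injective r _ hr).trans hι) (aleph0_le_mk _)
  calc #(paddedFiltration r Y i)
      = #(Subgroup.closure (r ⁻¹' Iic i) × supportedOn Y (Iic i)) :=
        mk_congr (Subgroup.prodEquiv _ _).toEquiv
    _ = #(Subgroup.closure (r ⁻¹' Iic i)) * #(supportedOn Y (Iic i)) := (mul_def _ _).symm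
    _ ≤ #(Y i) * #(Y i) := mul_le_mul' hclosure (mk_supportedOn_Iic_le hι hY)
    _ = #(Y i) := mul_eq_self (aleph0_le_mk _)

lemma le_mk_paddedFiltration_quotient (i : ι) :
    #(Y i) ≤ #(paddedFiltration r Y i ⧸
      (⨆ j : Iio i, paddedFiltration r Y j).subgroupOf (paddedFiltration r Y i)) := by
  have hbelow : ⨆ j : Iio i, paddedFiltration r Y j ≤
      (⊤ : Subgroup K).prod (supportedOn Y (Iio i)).toSubgroup :=
    iSup_le fun j => Subgroup.prod_mono le_top (supportedOn_mono (Iic_subset_Iio.2 j.2))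
  let single (y : Y i) : paddedFiltration r Y i :=
    ⟨(1, .ofAdd (DFinsupp.single i y)), one_mem _, single_mem_supportedOn self_mem_Iic y⟩
  refine mk_le_of_injective (f := fun y => QuotientGroup.mk (single y)) fun y z hyz => ?_
  have hcoord : (-DFinsupp.single i y + DFinsupp.single i z : Π₀ i, Y i) i = 0 :=
    (hbelow (Subgroup.mem_subgroupOf.1 (QuotientGroup.eq.1 hyz))).2 i self_notMem_Iio
  simpa [neg_add_eq_zero] using hcoord

lemma nonempty_normalForm_prod [∀ i, Infinite (Y i)] (hr : Function.Injective r)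
    (hι : ∀ i, #(Iic i) ≤ #(Y i)) (hY : Monotone fun i => #(Y i)) :
    Nonempty (NormalForm Y (K × Multiplicative (Π₀ i, Y i))) := by
  have hindex (i : ι) : #(Y i) = #(paddedFiltration r Y i ⧸
      (⨆ j : Iio i, paddedFiltration r Y j).subgroupOf (paddedFiltration r Y i)) :=
    (le_mk_paddedFiltration_quotient i).antisymm <| (mk_le_of_surjective
      QuotientGroup.mk_surjective).trans (mk_paddedFiltration_le hr (hι i) fun _ hj => hY hj)
  exact NormalForm.nonempty_of_equiv_quotient (paddedFiltration_mono r Y)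
    (exists_mem_paddedFiltration r Y) fun i => (Cardinal.eq.1 (hindex i)).some

end PaddedFiltration

section Universal

variable {ι : Type u} [LinearOrder ι] {Y : ι → Type u} [∀ i, AddCommGroup (Y i)]
  [∀ i, Infinite (Y i)]

lemma exists_injective_hom_iSup_permsBelow [WellFoundedLT ι] (hι : ∀ i, #(Iic i) ≤ #(Y i))
    (hY : Monotone fun i => #(Y i)) {K : Type u} [Group K] (hK : #K ≤ #ι) :
    ∃ f : K →* ↥(⨆ i, permsBelow Y i), Function.Injective f := by
  obtain ⟨r⟩ := hK
  obtain ⟨N⟩ := nonempty_normalForm_prod r.injective hι hY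
  refine ⟨(N.regularRep.codRestrict _ N.regularRep_mem_iSup_permsBelow).comp
    (MonoidHom.inl K _), ?_⟩
  exact ((MonoidHom.injective_codRestrict _ _ _).2 N.regularRep_injective).comp
    (Prod.mk_left_injective 1)

lemma mk_iSup_permsBelow_le [Nonempty ι] (hι : ∀ i, #(Iic i) ≤ #(Y i))
    (hY : Monotone fun i => #(Y i)) : #↥(⨆ i, permsBelow Y i) ≤ #ι * ⨆ i, 2 ^ #(Y i) := by
  refine (mk_iSup_le_of_directed permsBelow_mono.directed_le).trans
    (mul_le_mul_right (ciSup_mono bddAbove_of_small fun i => ?_) _)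
  have : Infinite (supportedOn Y (Iic i)) := infinite_supportedOn self_mem_Iic
  exact mk_permsBelow_le.trans <|
    power_le_power_left two_ne_zero (mk_supportedOn_Iic_le (hι i) fun _ hj => hY hj)

lemma mk_iSup_permsBelow_eq [WellFoundedLT ι] [Infinite ι] (hι : ∀ i, #(Iic i) ≤ #(Y i))
    (hY : Monotone fun i => #(Y i)) (hpow : ∀ i, 2 ^ #(Y i) ≤ #ι) :
    #↥(⨆ i, permsBelow Y i) = #ι := by
  apply le_antisymm
  · calc #↥(⨆ i, permsBelow Y i) ≤ #ι * ⨆ i, 2 ^ #(Y i) := mk_iSup_permsBelow_le hι hY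
      _ ≤ #ι * #ι := mul_le_mul' le_rfl (ciSup_le' hpow)
      _ = #ι := mul_eq_self (aleph0_le_mk ι)
  · have hfree : #(FreeGroup ι) = #ι := by rw [mk_freeGroup, max_eq_left (aleph0_le_mk ι)]
    obtain ⟨f, hf⟩ := exists_injective_hom_iSup_permsBelow hι hY hfree.le
    exact hfree ▸ mk_le_of_injective hf

lemma isUniversalGroup_iSup_permsBelow [WellFoundedLT ι] [Infinite ι]
    (hι : ∀ i, #(Iic i) ≤ #(Y i)) (hY : Monotone fun i => #(Y i))
    (hpow : ∀ i, 2 ^ #(Y i) ≤ #ι) : IsUniversalGroup ↥(⨆ i, permsBelow Y i) := fun _ _ hK =>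
  exists_injective_hom_iSup_permsBelow hι hY (hK.trans_eq (mk_iSup_permsBelow_eq hι hY hpow))

end Universal

theorem stmt_14_general (κ : Cardinal.{u}) (hκ : ℵ₀ < κ) (hpow : ∀ c < κ, 2 ^ c ≤ κ) :
    ∃ (U : Type u) (_ : Group U), #U = κ ∧ IsUniversalGroup U := by
  let ι := κ.ord.ToType
  let Y (i : ι) : Type u := Iic i →₀ ℤ
  have hι : #ι = κ := mk_ord_toType κ
  have : Infinite ι := infinite_iff.2 (hι ▸ hκ.le)
  have hY_mk (i : ι) : #(Y i) = max #(Iic i) ℵ₀ := by simp [Y]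
  have hY_infinite (i : ι) : Infinite (Y i) := infinite_iff.2 (hY_mk i ▸ le_max_right _ _)
  have hY_ge (i : ι) : #(Iic i) ≤ #(Y i) := hY_mk i ▸ le_max_left _ _
  have hY_mono : Monotone fun i => #(Y i) := fun i j hij => by
    simpa only [hY_mk] using max_le_max_right ℵ₀ (mk_le_mk_of_subset (Iic_subset_Iic.2 hij))
  have hY_pow (i : ι) : 2 ^ #(Y i) ≤ #ι := by
    have hIic : #(Iic i) < #ι := mk_Iic_lt i (by simp [ι]) (aleph0_le_mk ι)
    exact (hpow _ (hY_mk i ▸ max_lt (hIic.trans_eq hι) hκ)).trans_eq hι.symm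
  exact ⟨_, inferInstance, (mk_iSup_permsBelow_eq hY_ge hY_mono hY_pow).trans hι,
    isUniversalGroup_iSup_permsBelow hY_ge hY_mono hY_pow⟩

/-- Under GCH, for every uncountable cardinal `κ` there exists a universal group of
cardinality `κ`. -/
theorem stmt_14 (hGCH : GCH.{u}) (κ : Cardinal.{u}) (hκ : Cardinal.aleph0 < κ) :
    ∃ (U : Type u) (_ : Group U), Cardinal.mk U = κ ∧ IsUniversalGroup U :=
  stmt_14_general κ hκ fun c hc =>
    (power_le_power_left two_ne_zero (le_max_left c ℵ₀)).trans <|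
      (hGCH _ (le_max_right c ℵ₀)).trans_le (Order.succ_le_of_lt (max_lt hc hκ))
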